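/- arXiv:1710.08637 — 3 statements merged into one kernel-verified Lean document; each statement's English description precedes it below -/
import Mathlib

section
/- In the two-class ±1 model, the plain Euclidean nearest-neighbor rule (c = 1) misclassifies with probability decaying at exponential rate I: one has I > 0 and lim_{d→∞} (1/d) · log P(w is assigned class C₂ under the rule with c = 1) = −I. -/
/-!
Two-class ±1 model (CONTEXT 0).  The sample point consists of the base vectors
`m₁, m₂` (uniform on `{-1,1}^d`), the noise vectors `Y, Ỹ, Ȳ` (i.i.d. ±1 with
`P(+1) = 1-ρ`), the per-block tie-breaking fair coins and the final
tie-breaking fair coin.  STATEMENT 0: the plain Euclidean rule (`c = 1`)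
misclassifies with probability of exponential rate `I = I(0) > 0`.
-/

open MeasureTheory Filter
open scoped ENNReal

noncomputable section

/-- Law of a ±1-valued coordinate: `+1` with probability `1-ρ`, `-1` with probability `ρ`. -/
def signLaw (ρ : ℝ) : Measure ℝ :=
  ENNReal.ofReal (1 - ρ) • Measure.dirac 1 + ENNReal.ofReal ρ • Measure.dirac (-1)

/-- A fair coin on `Bool`. -/
def coinLaw : Measure Bool :=
  (1 / 2 : ℝ≥0∞) • Measure.dirac true + (1 / 2 : ℝ≥0∞) • Measure.dirac false

/-- Sample space of the two-class ±1 model with `c` segments: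
`(m₁, m₂, Y, Ỹ, Ȳ, per-block coins, final coin)`. -/
abbrev SignSpace (d c : ℕ) : Type :=
  (Fin d → ℝ) × (Fin d → ℝ) × (Fin d → ℝ) × (Fin d → ℝ) × (Fin d → ℝ) ×
    (Fin c → Bool) × Bool

/-- The joint law of the two-class ±1 model: `m₁, m₂` uniform on `{-1,1}^d`
(i.e. `signLaw (1/2)` coordinatewise), `Y, Ỹ, Ȳ` with i.i.d. `signLaw ρ`
coordinates, and independent fair tie-breaking coins. -/
def signModel (ρ : ℝ) (d c : ℕ) : Measure (SignSpace d c) :=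
  (Measure.pi fun _ : Fin d => signLaw (1 / 2)).prod <|
    (Measure.pi fun _ : Fin d => signLaw (1 / 2)).prod <|
      (Measure.pi fun _ : Fin d => signLaw ρ).prod <|
        (Measure.pi fun _ : Fin d => signLaw ρ).prod <|
          (Measure.pi fun _ : Fin d => signLaw ρ).prod <|
            (Measure.pi fun _ : Fin c => coinLaw).prod coinLaw

/-- The `c`-segmentation rule assigns the test word `w` to class `C₂`, given the
dictionary words `w1 ∈ C₁` and `w2 ∈ C₂`.  The coordinates are split into `c`
consecutive blocks of length `d / c`; block `j` votes for class 2 if `w` is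
strictly closer (in Euclidean distance, equivalently squared Euclidean
distance) to `w2` than to `w1` on that block, for class 1 if strictly closer to
`w1`, and according to the fair coin `coins j` in case of a tie; `w` is
assigned class `C₂` if a strict majority of blocks votes for class 2, or if
exactly half do and the final fair coin `fc` comes up heads. -/
def classifiedC2 {d c : ℕ} (w w1 w2 : Fin d → ℝ) (coins : Fin c → Bool) (fc : Bool) : Prop :=
  let dist2 : (Fin d → ℝ) → Fin c → ℝ := fun v j =>
    ∑ i : Fin d, if i.val / (d / c) = j.val then (w i - v i) ^ 2 else 0
  let vote2 : Fin c → Prop := fun j =>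
    dist2 w2 j < dist2 w1 j ∨ (dist2 w1 j = dist2 w2 j ∧ coins j = true)
  let V : ℕ := {j : Fin c | vote2 j}.ncard
  c < 2 * V ∨ (2 * V = c ∧ fc = true)

/-- The event that the test word `w = Ȳ × m₁` (distributed as a word of class `C₁`)
is assigned class `C₂` by the `c`-segmentation rule, with dictionary words
`w¹ = Y × m₁` and `w² = Ỹ × m₂` (coordinatewise products). -/
def signAssignedC2 (d c : ℕ) : Set (SignSpace d c) :=
  {ω | classifiedC2
        (fun i => ω.2.2.2.2.1 i * ω.1 i)
        (fun i => ω.2.2.1 i * ω.1 i)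
        (fun i => ω.2.2.2.1 i * ω.2.1 i)
        ω.2.2.2.2.2.1 ω.2.2.2.2.2.2}

/-- The moment generating function `E[e^{tX}]` of the random variable `X` with
`P(X = 1) = ρ(1-ρ)`, `P(X = 0) = 1/2`, `P(X = -1) = (1 - 2ρ + 2ρ²)/2`. -/
def mgfX (ρ t : ℝ) : ℝ :=
  ρ * (1 - ρ) * Real.exp t + 1 / 2 + (1 - 2 * ρ + 2 * ρ ^ 2) / 2 * Real.exp (-t)

/-- The Cramér rate function `I(x) = sup_t (t x - log E[e^{tX}])` of `X`. -/
def rateI (ρ x : ℝ) : ℝ := ⨆ t : ℝ, (t * x - Real.log (mgfX ρ t))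

/-! ### Coordinatewise reduction -/

/-- Law of the squared-distance pair of one coordinate. -/
def pairLaw (ρ : ℝ) : Measure (ℝ × ℝ) :=
  (ENNReal.ofReal (1 - 2 * ρ + 2 * ρ ^ 2) * ENNReal.ofReal (1 / 2)) • Measure.dirac (0, 0) +
  (ENNReal.ofReal (1 - 2 * ρ + 2 * ρ ^ 2) * ENNReal.ofReal (1 / 2)) • Measure.dirac (0, 4) +
  (ENNReal.ofReal (2 * ρ * (1 - ρ)) * ENNReal.ofReal (1 / 2)) • Measure.dirac (4, 0) +
  (ENNReal.ofReal (2 * ρ * (1 - ρ)) * ENNReal.ofReal (1 / 2)) • Measure.dirac (4, 4)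

/-- The pair of squared distances of one coordinate. -/
def pairMap (x : ℝ × ℝ × ℝ × ℝ × ℝ) : ℝ × ℝ :=
  ((x.2.2.2.2 * x.1 - x.2.2.1 * x.1) ^ 2, (x.2.2.2.2 * x.1 - x.2.2.2.1 * x.2.1) ^ 2)

lemma measurable_pairMap : Measurable pairMap := by
  unfold pairMap; fun_prop

lemma signLaw_prob (ρ : ℝ) (h0 : 0 ≤ ρ) (h1 : ρ ≤ 1) : IsProbabilityMeasure (signLaw ρ) := by
  constructor
  simp only [signLaw, Measure.add_apply, Measure.smul_apply, measure_univ, smul_eq_mul, mul_one]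
  rw [← ENNReal.ofReal_add (by linarith) h0]; simp

lemma coinLaw_prob : IsProbabilityMeasure coinLaw := by
  constructor
  simp only [coinLaw, Measure.add_apply, Measure.smul_apply, measure_univ, smul_eq_mul, mul_one]
  exact ENNReal.add_halves 1

lemma lintegral_signLaw (ρ : ℝ) (f : ℝ → ℝ≥0∞) :
    ∫⁻ x, f x ∂(signLaw ρ) = ENNReal.ofReal (1 - ρ) * f 1 + ENNReal.ofReal ρ * f (-1) := by
  simp [signLaw, lintegral_add_measure, lintegral_smul_measure, lintegral_dirac]

lemma lintegral_pairLaw (ρ : ℝ) (f : ℝ × ℝ → ℝ≥0∞) :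
    ∫⁻ x, f x ∂(pairLaw ρ) =
      (ENNReal.ofReal (1 - 2 * ρ + 2 * ρ ^ 2) * ENNReal.ofReal (1 / 2)) * f (0, 0) +
      (ENNReal.ofReal (1 - 2 * ρ + 2 * ρ ^ 2) * ENNReal.ofReal (1 / 2)) * f (0, 4) +
      (ENNReal.ofReal (2 * ρ * (1 - ρ)) * ENNReal.ofReal (1 / 2)) * f (4, 0) +
      (ENNReal.ofReal (2 * ρ * (1 - ρ)) * ENNReal.ofReal (1 / 2)) * f (4, 4) := by
  simp only [pairLaw, lintegral_add_measure, lintegral_smul_measure, lintegral_dirac, smul_eq_mul]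

lemma lintegral_signLaw_prod {β : Type*} [MeasurableSpace β] (ρ : ℝ) (ν : Measure β)
    [SFinite ν] (f : ℝ × β → ℝ≥0∞) (hf : Measurable f) :
    ∫⁻ x, f x ∂((signLaw ρ).prod ν) = ENNReal.ofReal (1 - ρ) * ∫⁻ y, f (1, y) ∂ν +
      ENNReal.ofReal ρ * ∫⁻ y, f (-1, y) ∂ν := by
  rw [lintegral_prod _ hf.aemeasurable, lintegral_signLaw]

lemma pairMap_preserving (ρ : ℝ) (h0 : 0 ≤ ρ) (h1 : ρ ≤ 1) :
    MeasurePreserving pairMap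
      ((signLaw (1/2)).prod ((signLaw (1/2)).prod ((signLaw ρ).prod
        ((signLaw ρ).prod (signLaw ρ))))) (pairLaw ρ) := by
  have := signLaw_prob ρ h0 h1
  have := signLaw_prob (1/2) (by norm_num) (by norm_num)
  refine ⟨measurable_pairMap, ?_⟩
  ext s hs
  have hf : Measurable (s.indicator (1 : ℝ × ℝ → ℝ≥0∞)) := measurable_one.indicator hs
  have hg := hf.comp measurable_pairMap
  rw [← lintegral_indicator_one hs, ← lintegral_indicator_one hs, lintegral_pairLaw,
    lintegral_map hf measurable_pairMap]
  generalize s.indicator (1 : ℝ × ℝ → ℝ≥0∞) = F at *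
  simp only [pairMap]
  rw [lintegral_signLaw_prod _ _ _ (by fun_prop)]
  repeat rw [lintegral_signLaw_prod _ _ _ (by fun_prop)]
  simp only [lintegral_signLaw]
  norm_num
  have e1 : ENNReal.ofReal (2 * ρ * (1 - ρ)) = ENNReal.ofReal ρ * ENNReal.ofReal (1 - ρ) +
      ENNReal.ofReal ρ * ENNReal.ofReal (1 - ρ) := by
    have : 0 ≤ 1 - ρ := by linarith
    rw [← ENNReal.ofReal_mul h0, ← ENNReal.ofReal_add (by positivity) (by positivity)]
    congr 1; ring
  have e2 : ENNReal.ofReal (1 - 2 * ρ + 2 * ρ ^ 2) = ENNReal.ofReal ρ * ENNReal.ofReal ρ +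
      ENNReal.ofReal (1 - ρ) * ENNReal.ofReal (1 - ρ) := by
    have : 0 ≤ 1 - ρ := by linarith
    rw [← ENNReal.ofReal_mul h0, ← ENNReal.ofReal_mul this,
      ← ENNReal.ofReal_add (by positivity) (by positivity)]
    congr 1; ring
  have e3 : ENNReal.ofReal ρ + ENNReal.ofReal (1 - ρ) = 1 := by
    rw [← ENNReal.ofReal_add h0 (by linarith)]; simp
  have e4 : ENNReal.ofReal (1/2) + ENNReal.ofReal (1/2) = 1 := by
    rw [← ENNReal.ofReal_add (by norm_num) (by norm_num)]; norm_num
  rw [e1, e2]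
  generalize ENNReal.ofReal ρ = r at *
  generalize ENNReal.ofReal (1 - ρ) = r' at *
  generalize ENNReal.ofReal (1 / 2) = h at *
  have key : ∀ R : ℝ≥0∞, R = (h + h) * (r + r') * R := by
    intro R; rw [e3, e4, one_mul, one_mul]
  refine Eq.trans ?_ (key _).symm
  ring

lemma zip_preserving {d : ℕ} {α β : Type} [MeasurableSpace α] [MeasurableSpace β]
    (μ : Measure α) (ν : Measure β) [IsProbabilityMeasure μ] [IsProbabilityMeasure ν] :
    MeasurePreserving (fun (p : (Fin d → α) × (Fin d → β)) i => (p.1 i, p.2 i))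
      ((Measure.pi fun _ => μ).prod (Measure.pi fun _ => ν)) (Measure.pi fun _ => μ.prod ν) := by
  have := (measurePreserving_arrowProdEquivProdArrow α β (Fin d) (fun _ => μ) (fun _ => ν)).symm
  exact this


lemma pairLaw_prob (ρ : ℝ) (h0 : 0 ≤ ρ) (h1 : ρ ≤ 1) : IsProbabilityMeasure (pairLaw ρ) := by
  have := signLaw_prob ρ h0 h1
  have := signLaw_prob (1/2) (by norm_num) (by norm_num)
  have h := pairMap_preserving ρ h0 h1
  rw [← h.map_eq]
  exact Measure.isProbabilityMeasure_map h.measurable.aemeasurable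

lemma zipTail_preserving {d : ℕ} {α β γ : Type} [MeasurableSpace α] [MeasurableSpace β]
    [MeasurableSpace γ]
    (μ : Measure α) (ν : Measure β) (τ : Measure γ) [IsProbabilityMeasure μ]
    [IsProbabilityMeasure ν] [IsProbabilityMeasure τ] :
    MeasurePreserving (fun (p : (Fin d → α) × ((Fin d → β) × γ)) =>
        ((fun i => (p.1 i, p.2.1 i) : Fin d → α × β), p.2.2))
      ((Measure.pi fun _ => μ).prod ((Measure.pi fun _ => ν).prod τ))
      ((Measure.pi fun _ => μ.prod ν).prod τ) := by
  have h := ((zip_preserving (d := d) μ ν).prod (MeasurePreserving.id τ)).comp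
    (measurePreserving_prodAssoc (Measure.pi fun _ : Fin d => μ)
      (Measure.pi fun _ : Fin d => ν) τ).symm
  exact h

/-- The reduction of the sample space to squared-distance pairs and coins. -/
def redMap (d : ℕ) (ω : SignSpace d 1) : (Fin d → ℝ × ℝ) × ((Fin 1 → Bool) × Bool) :=
  (fun i => pairMap (ω.1 i, ω.2.1 i, ω.2.2.1 i, ω.2.2.2.1 i, ω.2.2.2.2.1 i),
    ω.2.2.2.2.2)

/-- The law of the coins. -/
def tailLaw : Measure ((Fin 1 → Bool) × Bool) := (Measure.pi fun _ : Fin 1 => coinLaw).prod coinLaw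

lemma tailLaw_prob : IsProbabilityMeasure tailLaw := by
  have := coinLaw_prob
  unfold tailLaw; infer_instance

lemma redMap_preserving (ρ : ℝ) (h0 : 0 ≤ ρ) (h1 : ρ ≤ 1) (d : ℕ) :
    MeasurePreserving (redMap d) (signModel ρ d 1)
      ((Measure.pi fun _ : Fin d => pairLaw ρ).prod tailLaw) := by
  have := signLaw_prob ρ h0 h1
  have := signLaw_prob (1/2) (by norm_num) (by norm_num)
  have := pairLaw_prob ρ h0 h1
  have := tailLaw_prob
  have a4 := zipTail_preserving (d := d) (signLaw ρ) (signLaw ρ) tailLaw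
  have a3 := (zipTail_preserving (d := d) (signLaw ρ) ((signLaw ρ).prod (signLaw ρ)) tailLaw).comp
    ((MeasurePreserving.id (Measure.pi fun _ : Fin d => signLaw ρ)).prod a4)
  have a2 := (zipTail_preserving (d := d) (signLaw (1/2)) _ tailLaw).comp
    ((MeasurePreserving.id (Measure.pi fun _ : Fin d => signLaw (1/2))).prod a3)
  have a1 := (zipTail_preserving (d := d) (signLaw (1/2)) _ tailLaw).comp
    ((MeasurePreserving.id (Measure.pi fun _ : Fin d => signLaw (1/2))).prod a2)
  have b := ((measurePreserving_pi (ι := Fin d) _ _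
    (fun _ => pairMap_preserving ρ h0 h1)).prod (MeasurePreserving.id tailLaw)).comp a1
  exact b

/-- The event in reduced coordinates. -/
def redEvent (d : ℕ) : Set ((Fin d → ℝ × ℝ) × ((Fin 1 → Bool) × Bool)) :=
  {z | ∑ i, (z.1 i).2 < ∑ i, (z.1 i).1 ∨ (∑ i, (z.1 i).1 = ∑ i, (z.1 i).2 ∧ z.2.1 0 = true)}

lemma redEvent_measurable (d : ℕ) : MeasurableSet (redEvent d) := by
  have f1 : Measurable (fun z : (Fin d → ℝ × ℝ) × ((Fin 1 → Bool) × Bool) =>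
    ∑ i, (z.1 i).1) := by fun_prop
  have f2 : Measurable (fun z : (Fin d → ℝ × ℝ) × ((Fin 1 → Bool) × Bool) =>
    ∑ i, (z.1 i).2) := by fun_prop
  unfold redEvent
  apply MeasurableSet.union
  · exact measurableSet_lt f2 f1
  · apply MeasurableSet.inter
    · exact measurableSet_eq_fun f1 f2
    · have hm : Measurable (fun z : (Fin d → ℝ × ℝ) × ((Fin 1 → Bool) × Bool) => z.2.1 0) := by
        fun_prop
      exact hm (measurableSet_singleton true)

lemma event_eq (d : ℕ) : signAssignedC2 d 1 = redMap d ⁻¹' redEvent d := by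
  ext ω
  have hz : ∀ i : Fin d, i.val / (d / 1) = ((0 : Fin 1) : ℕ) := by
    intro i; rw [Nat.div_one]; exact Nat.div_eq_of_lt i.2
  have hV : ∀ p : Fin 1 → Prop, (1 < 2 * {j : Fin 1 | p j}.ncard ∨
      (2 * {j : Fin 1 | p j}.ncard = 1 ∧ ω.2.2.2.2.2.2 = true)) ↔ p 0 := by
    intro p
    by_cases hp : p 0
    · have : {j : Fin 1 | p j} = {0} := by
        ext j; have := Subsingleton.elim j 0; subst this; simp [hp]
      simp [this, hp]
    · have : {j : Fin 1 | p j} = ∅ := by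
        ext j; have := Subsingleton.elim j 0; subst this; simp [hp]
      simp [this, hp]
  refine (hV _).trans ?_
  simp only [hz, if_true, redMap, redEvent, Set.mem_preimage, Set.mem_ofPred_eq, pairMap]

lemma prob_eq (ρ : ℝ) (h0 : 0 ≤ ρ) (h1 : ρ ≤ 1) (d : ℕ) :
    signModel ρ d 1 (signAssignedC2 d 1) =
      ((Measure.pi fun _ : Fin d => pairLaw ρ).prod tailLaw) (redEvent d) := by
  rw [event_eq, (redMap_preserving ρ h0 h1 d).measure_preimage
    (redEvent_measurable d).nullMeasurableSet]

lemma tail_half : tailLaw {z | z.1 0 = true} = 1 / 2 := by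
  have := coinLaw_prob
  have : {z : (Fin 1 → Bool) × Bool | z.1 0 = true} = (Set.univ.pi fun _ => {true}) ×ˢ Set.univ := by
    ext z
    simp only [Set.mem_ofPred_eq, Set.mem_prod, Set.mem_pi, Set.mem_univ, and_true]
    constructor
    · intro h i _; have := Subsingleton.elim i 0; subst this; exact h
    · intro h; exact h 0 trivial
  rw [this, tailLaw, Measure.prod_prod, Measure.pi_pi]
  simp [coinLaw, ENNReal.inv_two_add_inv_two]

lemma upper_bound (ρ : ℝ) (h0 : 0 ≤ ρ) (h1 : ρ ≤ 1) (d : ℕ) (t : ℝ) (ht : 0 ≤ t) :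
    (signModel ρ d 1 (signAssignedC2 d 1)).toReal ≤ mgfX ρ t ^ d := by
  have := pairLaw_prob ρ h0 h1
  have := tailLaw_prob
  rw [prob_eq ρ h0 h1]
  set f : ℝ × ℝ → ℝ := fun x => Real.exp (t / 4 * (x.1 - x.2)) with hf
  have hfi : ∀ (c : ℝ≥0∞) (x : ℝ × ℝ), c ≠ ⊤ → Integrable f (c • Measure.dirac x) := by
    intro c x hc
    exact (integrable_dirac (by simp [hf])).smul_measure hc
  have hi1 := hfi (ENNReal.ofReal (1 - 2 * ρ + 2 * ρ ^ 2) * ENNReal.ofReal (1 / 2)) (0, 0)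
    (ENNReal.mul_ne_top (by simp) (by simp))
  have hi2 := hfi (ENNReal.ofReal (1 - 2 * ρ + 2 * ρ ^ 2) * ENNReal.ofReal (1 / 2)) (0, 4)
    (ENNReal.mul_ne_top (by simp) (by simp))
  have hi3 := hfi (ENNReal.ofReal (2 * ρ * (1 - ρ)) * ENNReal.ofReal (1 / 2)) (4, 0)
    (ENNReal.mul_ne_top (by simp) (by simp))
  have hi4 := hfi (ENNReal.ofReal (2 * ρ * (1 - ρ)) * ENNReal.ofReal (1 / 2)) (4, 4)
    (ENNReal.mul_ne_top (by simp) (by simp))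
  have hfint : Integrable f (pairLaw ρ) :=
    ((hi1.add_measure hi2).add_measure hi3).add_measure hi4
  have hval : ∫ x, f x ∂(pairLaw ρ) = mgfX ρ t := by
    unfold pairLaw
    rw [integral_add_measure ((hi1.add_measure hi2).add_measure hi3) hi4,
      integral_add_measure (hi1.add_measure hi2) hi3, integral_add_measure hi1 hi2]
    simp only [integral_smul_measure, integral_dirac, ENNReal.toReal_mul, hf, smul_eq_mul]
    rw [ENNReal.toReal_ofReal (by nlinarith), ENNReal.toReal_ofReal (by norm_num),
      ENNReal.toReal_ofReal (by nlinarith)]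
    have e1 : t / 4 * (4 - 0) = t := by ring
    have e2 : t / 4 * (0 - 4) = -t := by ring
    simp only [e1, e2, sub_self, mul_zero, Real.exp_zero, mgfX]
    ring
  have hI : Integrable (fun z : Fin d → ℝ × ℝ => ∏ i, f (z i))
      (Measure.pi fun _ : Fin d => pairLaw ρ) :=
    Integrable.fintype_prod (f := fun _ => f) (fun _ => hfint)
  have hmk : 1 * (Measure.pi fun _ : Fin d => pairLaw ρ).real {z | 1 ≤ ∏ i, f (z i)} ≤
      ∫ z, ∏ i, f (z i) ∂(Measure.pi fun _ : Fin d => pairLaw ρ) := mul_meas_ge_le_integral_of_nonneg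
    (Filter.Eventually.of_forall fun z => Finset.prod_nonneg fun i _ => (Real.exp_pos _).le) hI 1
  rw [integral_fintype_prod_eq_pow, hval, one_mul, Fintype.card_fin] at hmk
  refine le_trans ?_ hmk
  rw [measureReal_def]
  apply ENNReal.toReal_mono (measure_ne_top _ _)
  have hsub : redEvent d ⊆ {z : Fin d → ℝ × ℝ | 1 ≤ ∏ i, f (z i)} ×ˢ Set.univ := by
    intro z hz
    have hle : ∑ i, (z.1 i).2 ≤ ∑ i, (z.1 i).1 := by
      rcases hz with h | h
      · exact h.le
      · exact h.1.ge
    refine ⟨?_, trivial⟩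
    simp only [Set.mem_ofPred_eq, hf]
    rw [← Real.exp_sum, ← Finset.mul_sum, Finset.sum_sub_distrib]
    exact Real.one_le_exp (mul_nonneg (by positivity) (by linarith))
  refine (measure_mono hsub).trans ?_
  rw [Measure.prod_prod]; simp

/-- The configuration with minus signs on `s` (first distance) and `t` (second). -/
def cfg {d : ℕ} (p : Finset (Fin d) × Finset (Fin d)) : Fin d → ℝ × ℝ :=
  fun i => (if i ∈ p.1 then 4 else 0, if i ∈ p.2 then 4 else 0)

lemma cfg_inj {d : ℕ} : Function.Injective (cfg (d := d)) := by
  intro p q h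
  have h' : ∀ i, (i ∈ p.1 ↔ i ∈ q.1) ∧ (i ∈ p.2 ↔ i ∈ q.2) := by
    intro i
    have := congrFun h i
    simp only [cfg, Prod.mk.injEq] at this
    constructor
    · have := this.1; split_ifs at this <;> simp_all
    · have := this.2; split_ifs at this <;> simp_all
  ext i
  · exact (h' i).1
  · exact (h' i).2

lemma pair_single (ρ : ℝ) (P Q : Prop) [Decidable P] [Decidable Q] :
    pairLaw ρ {((if P then 4 else 0 : ℝ), (if Q then 4 else 0 : ℝ))} =
      (if P then ENNReal.ofReal (2 * ρ * (1 - ρ)) else ENNReal.ofReal (1 - 2 * ρ + 2 * ρ ^ 2)) *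
        ENNReal.ofReal (1 / 2) := by
  by_cases P <;> by_cases Q <;> simp [pairLaw, *]

lemma lower_bound (ρ : ℝ) (h0 : 0 ≤ ρ) (h1 : ρ ≤ 1) (d k : ℕ) (hk : k ≤ d) :
    (1 / 2) * ((d.choose k : ℝ) ^ 2 *
      ((2 * ρ * (1 - ρ)) ^ k * (1 - 2 * ρ + 2 * ρ ^ 2) ^ (d - k) * (1 / 2) ^ d)) ≤
      (signModel ρ d 1 (signAssignedC2 d 1)).toReal := by
  have := pairLaw_prob ρ h0 h1
  have := tailLaw_prob
  rw [prob_eq ρ h0 h1]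
  set T : Finset (Finset (Fin d) × Finset (Fin d)) :=
    (Finset.univ.powersetCard k) ×ˢ (Finset.univ.powersetCard k) with hT
  have hsub : ((T.map ⟨cfg, cfg_inj⟩ : Finset (Fin d → ℝ × ℝ)) : Set (Fin d → ℝ × ℝ)) ×ˢ
      {z : (Fin 1 → Bool) × Bool | z.1 0 = true} ⊆ redEvent d := by
    rintro ⟨z, c⟩ ⟨hz, hc⟩
    simp only [Finset.coe_map, Set.mem_image, Finset.mem_coe, Function.Embedding.coeFn_mk] at hz
    obtain ⟨p, hp, rfl⟩ := hz
    simp only [hT, Finset.mem_product, Finset.mem_powersetCard] at hp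
    right
    refine ⟨?_, hc⟩
    simp [cfg, hp.1.2, hp.2.2]
  have hm := measure_mono (μ := (Measure.pi fun _ : Fin d => pairLaw ρ).prod tailLaw) hsub
  rw [Measure.prod_prod, tail_half, ← sum_measure_singleton, Finset.sum_map] at hm
  have hα : 0 ≤ 2 * ρ * (1 - ρ) := by nlinarith
  have hβ : 0 ≤ 1 - 2 * ρ + 2 * ρ ^ 2 := by nlinarith
  have hs : ∀ p ∈ T, (Measure.pi fun _ : Fin d => pairLaw ρ)
      {(⟨cfg, cfg_inj⟩ : _ ↪ (Fin d → ℝ × ℝ)) p} =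
      ENNReal.ofReal ((2 * ρ * (1 - ρ)) ^ k * (1 - 2 * ρ + 2 * ρ ^ 2) ^ (d - k) * (1 / 2) ^ d) := by
    intro p hp
    simp only [hT, Finset.mem_product, Finset.mem_powersetCard] at hp
    simp only [Function.Embedding.coeFn_mk, Measure.pi_singleton, cfg, pair_single]
    rw [Finset.prod_mul_distrib, Finset.prod_ite, Finset.prod_const, Finset.prod_const,
      Finset.prod_const, ENNReal.ofReal_mul (q := (1 / 2) ^ d) (by positivity),
      ENNReal.ofReal_mul (q := (1 - 2 * ρ + 2 * ρ ^ 2) ^ (d - k)) (by positivity),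
      ENNReal.ofReal_pow hα, ENNReal.ofReal_pow hβ, ENNReal.ofReal_pow (by norm_num)]
    have c1 : (Finset.univ.filter (fun i => i ∈ p.1)).card = k := by simp [hp.1.2]
    have c2 : (Finset.univ.filter (fun i => i ∉ p.1)).card = d - k := by
      rw [← hp.1.2, ← Finset.compl_filter, Finset.card_compl]; simp
    rw [c1, c2]; simp
  rw [Finset.sum_congr rfl hs, Finset.sum_const] at hm
  have hr := ENNReal.toReal_mono (measure_ne_top _ _) hm
  refine le_trans (le_of_eq ?_) hr
  have hc : T.card = d.choose k * d.choose k := by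
    simp [hT, Finset.card_product, Finset.card_powersetCard]
  rw [hc, ENNReal.toReal_mul, nsmul_eq_mul, ENNReal.toReal_mul, ENNReal.toReal_ofReal
    (by positivity)]
  simp
  ring

/-! ### Analysis -/

lemma final_step (ρ : ℝ) (hρ0 : 0 < ρ) (hρ : ρ < 1 / 2) :
    ∃ m : ℝ, 0 < m ∧ m < 1 ∧ (∀ t, m ≤ mgfX ρ t) ∧ (∃ t, 0 ≤ t ∧ mgfX ρ t = m) ∧
      ∀ d : ℕ, (1 / 2) * (m ^ d / (d + 1) ^ 2) ≤
        (signModel ρ d 1 (signAssignedC2 d 1)).toReal := by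
  have hp : 0 < ρ * (1 - ρ) := by nlinarith
  have hq : 0 < (1 - 2 * ρ + 2 * ρ ^ 2) / 2 := by nlinarith
  have hpq : ρ * (1 - ρ) < (1 - 2 * ρ + 2 * ρ ^ 2) / 2 := by nlinarith
  set u := √(ρ * (1 - ρ)) with hu
  set v := √((1 - 2 * ρ + 2 * ρ ^ 2) / 2) with hv
  have u0 : 0 < u := Real.sqrt_pos.2 hp
  have v0 : 0 < v := Real.sqrt_pos.2 hq
  have uv : u < v := Real.sqrt_lt_sqrt hp.le hpq
  have u2 : u ^ 2 = ρ * (1 - ρ) := Real.sq_sqrt hp.le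
  have v2 : v ^ 2 = (1 - 2 * ρ + 2 * ρ ^ 2) / 2 := Real.sq_sqrt hq.le
  have hs : u ^ 2 + v ^ 2 = 1 / 2 := by rw [u2, v2]; ring
  refine ⟨(u + v) ^ 2, by positivity, by nlinarith [mul_pos (sub_pos.2 uv) (sub_pos.2 uv)],
    ?_, ⟨Real.log (v / u), Real.log_nonneg ((one_le_div u0).2 uv.le), ?_⟩, ?_⟩
  · intro t
    rw [mgfX, ← u2, ← v2]
    have e1 : Real.exp t = Real.exp (t / 2) ^ 2 := by rw [← Real.exp_nat_mul]; congr 1; push_cast; ring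
    have e2 : Real.exp (-t) = Real.exp (-(t / 2)) ^ 2 := by
      rw [← Real.exp_nat_mul]; congr 1; push_cast; ring
    have e3 : Real.exp (t / 2) * Real.exp (-(t / 2)) = 1 := by rw [← Real.exp_add]; simp
    rw [e1, e2]
    have := sq_nonneg (u * Real.exp (t / 2) - v * Real.exp (-(t / 2)))
    have h3 : u * Real.exp (t / 2) * (v * Real.exp (-(t / 2))) = u * v := by
      linear_combination u * v * e3
    nlinarith
  · rw [mgfX, ← u2, ← v2, Real.exp_neg, Real.exp_log (by positivity)]
    field_simp
    nlinarith
  · intro d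
    obtain ⟨k, hk, hle⟩ : ∃ k ∈ Finset.range (d + 1),
        (u + v) ^ d / (d + 1) ≤ u ^ k * v ^ (d - k) * (d.choose k) := by
      by_contra! hcon
      have := Finset.sum_lt_sum_of_nonempty (by simp) hcon
      rw [← add_pow, Finset.sum_const, Finset.card_range, nsmul_eq_mul] at this
      push_cast at this
      rw [mul_div_cancel₀ _ (by positivity)] at this
      exact lt_irrefl _ this
    have hk' : k ≤ d := by simpa [Nat.lt_succ_iff] using hk
    refine le_trans ?_ (lower_bound ρ hρ0.le (by linarith) d k hk')
    have hsq := pow_le_pow_left₀ (by positivity) hle 2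
    have e1 : 2 * ρ * (1 - ρ) = 2 * u ^ 2 := by rw [u2]; ring
    have e2 : 1 - 2 * ρ + 2 * ρ ^ 2 = 2 * v ^ 2 := by rw [v2]; ring
    have e3 : (2 : ℝ) ^ k * 2 ^ (d - k) * (1 / 2) ^ d = 1 := by
      rw [← pow_add, Nat.add_sub_cancel' hk', ← mul_pow]; norm_num
    rw [e1, e2]
    apply mul_le_mul_of_nonneg_left _ (by norm_num)
    calc ((u + v) ^ 2) ^ d / ((d : ℝ) + 1) ^ 2 = ((u + v) ^ d / (d + 1)) ^ 2 := by
          rw [div_pow, ← pow_mul, ← pow_mul, mul_comm]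
      _ ≤ _ := hsq
      _ = (d.choose k : ℝ) ^ 2 * ((u ^ k) ^ 2 * (v ^ (d - k)) ^ 2) *
          ((2 : ℝ) ^ k * 2 ^ (d - k) * (1 / 2) ^ d) := by rw [e3]; ring
      _ = _ := by rw [mul_pow, mul_pow]; ring

/-- in the two-class ±1 model, the plain Euclidean nearest-neighbor
rule (`c = 1`) misclassifies with probability decaying at exponential rate
`I = I(0) > 0`:  `lim_{d→∞} (1/d) log P(w assigned C₂ with c = 1) = -I`. -/
theorem euclidean_rule_misclassification_rate (ρ : ℝ) (hρ0 : 0 < ρ) (hρ : ρ < 1 / 2) :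
    0 < rateI ρ 0 ∧
      Tendsto (fun d : ℕ =>
          (1 / (d : ℝ)) * Real.log ((signModel ρ d 1 (signAssignedC2 d 1)).toReal))
        atTop (nhds (-(rateI ρ 0))) := by
  obtain ⟨m, m0, m1, hmin, ⟨t, ht, htm⟩, hlow⟩ := final_step ρ hρ0 hρ
  have hlub : IsLUB (Set.range fun t : ℝ => t * 0 - Real.log (mgfX ρ t)) (-Real.log m) := by
    constructor
    · rintro _ ⟨s, rfl⟩
      have := Real.log_le_log m0 (hmin s)
      simp only [mul_zero]; linarith
    · intro b hb
      have := hb ⟨t, rfl⟩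
      simp only [mul_zero, htm] at this; linarith
  have hI : rateI ρ 0 = -Real.log m := hlub.ciSup_eq
  rw [hI, neg_neg]
  refine ⟨neg_pos.2 (Real.log_neg m0 m1), ?_⟩
  have hup : ∀ d : ℕ, (signModel ρ d 1 (signAssignedC2 d 1)).toReal ≤ m ^ d := fun d => by
    rw [← htm]; exact upper_bound ρ hρ0.le (by linarith) d t ht
  have hlim : Tendsto (fun d : ℕ => (1 / (d : ℝ)) * (Real.log (1 / 2)) + Real.log m -
      2 * (Real.log ((d : ℝ) + 1) / d)) atTop (nhds (Real.log m)) := by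
    have a1 : Tendsto (fun d : ℕ => (1 / (d : ℝ))) atTop (nhds 0) :=
      tendsto_one_div_atTop_nhds_zero_nat
    have a2 : Tendsto (fun d : ℕ => Real.log ((d : ℝ) + 1) / d) atTop (nhds 0) := by
      have b1 : Tendsto (fun x : ℝ => Real.log x / (x - 1)) atTop (nhds 0) := by
        have := Real.tendsto_pow_log_div_mul_add_atTop 1 (-1) 1 one_ne_zero
        simpa [sub_eq_add_neg] using this
      have b2 : Tendsto (fun d : ℕ => (d : ℝ) + 1) atTop atTop :=
        tendsto_atTop_add_const_right _ _ tendsto_natCast_atTop_atTop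
      have := b1.comp b2
      simpa [Function.comp_def] using this
    have := ((a1.mul_const (Real.log (1 / 2))).add_const (Real.log m)).sub (a2.const_mul 2)
    simpa using this
  refine tendsto_of_tendsto_of_tendsto_of_le_of_le' hlim tendsto_const_nhds ?_ ?_
  · filter_upwards [eventually_gt_atTop 0] with d hd
    have hd' : (0 : ℝ) < d := by exact_mod_cast hd
    have h := Real.log_le_log (by positivity) (hlow d)
    rw [Real.log_mul (by norm_num) (by positivity), Real.log_div (x := m ^ d) (by positivity) (by positivity),
      Real.log_pow, Real.log_pow] at h
    refine le_trans (le_of_eq ?_) (mul_le_mul_of_nonneg_left h (by positivity))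
    push_cast
    field_simp
    ring
  · filter_upwards [eventually_gt_atTop 0] with d hd
    have hd' : (0 : ℝ) < d := by exact_mod_cast hd
    have hpos : 0 < (signModel ρ d 1 (signAssignedC2 d 1)).toReal :=
      lt_of_lt_of_le (by positivity) (hlow d)
    have h := Real.log_le_log hpos (hup d)
    rw [Real.log_pow] at h
    refine (mul_le_mul_of_nonneg_left h (by positivity)).trans (le_of_eq ?_)
    field_simp

end
end

section
/- In the two-class sparse-perturbation model, assume l(d) → ∞ and p(d)·l(d) → 0 as d → ∞. Then the c-segmentation rule with c = d/l classifies correctly with probability tending to one: P(w is misclassified under the rule with c = d/l) → 0 as d → ∞ (and l → ∞). -/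
/-!
Two-class sparse-perturbation model.  `m₁ = 0 ∈ ℝ^d`, `m₂` has a `1` at every
position `i ≡ 1 (mod l)` (0-indexed: `i % l = 0`) and `0` elsewhere; the noise
vectors `Y, Ỹ, Ȳ` are independent with i.i.d. coordinates equal to `N` with
probability `p` and `0` with probability `1-p`.  The dictionary words are
`w¹ = m₁ + Y ∈ C₁`, `w² = m₂ + Ỹ ∈ C₂`, and the test word is `w = m₁ + Ȳ`,
distributed as a word of class `C₁`.  The `c`-segmentation rule is the
block-majority-vote rule with fair tie-breaking.
-/

open MeasureTheory Filter
open scoped ENNReal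

noncomputable section

/-- Law of a noise coordinate: `N` with probability `p`, `0` with probability `1-p`. -/
def noiseLaw (p N : ℝ) : Measure ℝ :=
  ENNReal.ofReal p • Measure.dirac N + ENNReal.ofReal (1 - p) • Measure.dirac 0

/-- Sample space of the sparse-perturbation model with `c` segments:
`(Y, Ỹ, Ȳ, per-block coins, final coin)`. -/
abbrev SparseSpace (d c : ℕ) : Type :=
  (Fin d → ℝ) × (Fin d → ℝ) × (Fin d → ℝ) × (Fin c → Bool) × Bool

/-- Joint law of the sparse-perturbation model: `Y, Ỹ, Ȳ` independent with
i.i.d. `noiseLaw p N` coordinates, and independent fair tie-breaking coins. -/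
def sparseModel (p N : ℝ) (d c : ℕ) : Measure (SparseSpace d c) :=
  (Measure.pi fun _ : Fin d => noiseLaw p N).prod <|
    (Measure.pi fun _ : Fin d => noiseLaw p N).prod <|
      (Measure.pi fun _ : Fin d => noiseLaw p N).prod <|
        (Measure.pi fun _ : Fin c => coinLaw).prod coinLaw

/-- The base vector `m₂` of class `C₂`: `1` at every position `i ≡ 1 (mod l)`
(0-indexed: `i % l = 0`), `0` elsewhere. -/
def base2 (d l : ℕ) : Fin d → ℝ := fun i => if i.val % l = 0 then 1 else 0

/-- The event that the test word `w = m₁ + Ȳ = Ȳ` is assigned class `C₂` by the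
`c`-segmentation rule, with dictionary words `w¹ = Y` and `w² = m₂ + Ỹ`. -/
def sparseAssignedC2 (d c l : ℕ) : Set (SparseSpace d c) :=
  {ω | classifiedC2 ω.2.2.1 ω.1 (fun i => base2 d l i + ω.2.1 i) ω.2.2.2.1 ω.2.2.2.2}

instance noiseLaw_prob (p N : ℝ) [hp : Fact (p ∈ Set.Ioo (0 : ℝ) 1)] :
    IsProbabilityMeasure (noiseLaw p N) := by
  constructor
  have h1 := hp.out.1.le
  have h2 := hp.out.2.le
  simp only [noiseLaw, Measure.add_apply, Measure.smul_apply, measure_univ, smul_eq_mul, mul_one]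
  rw [← ENNReal.ofReal_add h1 (by linarith)]
  simp

instance coinLaw_prob_s6 : IsProbabilityMeasure coinLaw := by
  constructor
  simp [coinLaw, ENNReal.inv_two_add_inv_two]

/-- indicator of nonzero noise -/
def nzInd (x : ℝ) : ℝ≥0∞ := Set.indicator ({0}ᶜ : Set ℝ) 1 x

lemma nzInd_meas : Measurable nzInd :=
  measurable_one.indicator (measurableSet_singleton 0).compl

lemma nzInd_zero_or (x : ℝ) (h : x ≠ 0) : nzInd x = 1 := by
  simp [nzInd, h]

lemma nzInd_lint (p N : ℝ) : ∫⁻ x, nzInd x ∂(noiseLaw p N) ≤ ENNReal.ofReal p := by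
  have : nzInd = Set.indicator ({0}ᶜ : Set ℝ) 1 := rfl
  rw [this, lintegral_indicator_one (measurableSet_singleton 0).compl]
  simp only [noiseLaw, Measure.add_apply, Measure.smul_apply, smul_eq_mul]
  have h0 : (Measure.dirac (0:ℝ)) ({0}ᶜ : Set ℝ) = 0 := by
    rw [Measure.dirac_apply' _ (measurableSet_singleton 0).compl]; simp
  rw [h0, mul_zero, add_zero]
  calc _ ≤ ENNReal.ofReal p * 1 := by gcongr; exact prob_le_one
    _ = _ := mul_one _

lemma vote_count {d l : ℕ} (hd : 0 < d) (hl : 0 < l) (hld : l ∣ d)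
    (ω : SparseSpace d (d / l)) (h : ω ∈ sparseAssignedC2 d (d / l) l) :
    ((d / l : ℕ) : ℝ≥0∞) ≤
      2 * ∑ i : Fin d, (nzInd (ω.1 i) + nzInd (ω.2.1 i) + nzInd (ω.2.2.1 i)) := by
  classical
  obtain ⟨Y, Y', Z, coins, fc⟩ := ω
  obtain ⟨c, rfl⟩ := hld
  have hc : 0 < c := Nat.pos_of_mul_pos_left hd
  have e1 : l * c / l = c := Nat.mul_div_cancel_left c hl
  have e2 : l * c / (l * c / l) = l := by rw [e1]; exact Nat.mul_div_cancel l hc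
  simp only [sparseAssignedC2, Set.mem_ofPred_eq, classifiedC2] at h
  simp only [e2] at h
  set S := {j : Fin (l * c / l) | _} with hS
  have hV : l * c / l ≤ 2 * S.ncard := by
    rcases h with h | h
    · exact h.le
    · exact h.1.ge
  let B : Finset (Fin (l * c)) := Finset.univ.filter (fun i => Y i ≠ 0 ∨ Y' i ≠ 0 ∨ Z i ≠ 0)
  let g : Fin (l * c) → Fin (l * c / l) := fun i =>
    ⟨i.val / l, by rw [e1]; exact Nat.div_lt_of_lt_mul i.2⟩
  have hsub : S ⊆ g '' (B : Set (Fin (l * c))) := by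
    intro j hj
    by_contra hcon
    have hz : ∀ i : Fin (l * c), i.val / l = j.val → Y i = 0 ∧ Y' i = 0 ∧ Z i = 0 := by
      intro i hi
      by_contra hne
      apply hcon
      refine ⟨i, ?_, Fin.ext hi⟩
      simp only [B, Finset.coe_filter, Finset.mem_univ, true_and, Set.mem_ofPred_eq]
      tauto
    have d1 : (∑ i : Fin (l * c), if i.val / l = j.val then (Z i - Y i) ^ 2 else 0) = 0 := by
      apply Finset.sum_eq_zero
      intro i _
      split_ifs with hi
      · simp [hz i hi]
      · rfl
    have d2 : 0 < (∑ i : Fin (l * c), if i.val / l = j.val then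
        (Z i - (base2 (l * c) l i + Y' i)) ^ 2 else 0) := by
      have hj2 : j.val < c := by have := j.2; omega
      apply Finset.sum_pos'
      · intro i _
        split_ifs <;> positivity
      · refine ⟨⟨l * j.val, Nat.mul_lt_mul_of_pos_left hj2 hl⟩, Finset.mem_univ _, ?_⟩
        have hi : l * j.val / l = j.val := Nat.mul_div_cancel_left _ hl
        have := hz ⟨l * j.val, Nat.mul_lt_mul_of_pos_left hj2 hl⟩ hi
        simp [hi, this, base2]
    simp only [hS, Set.mem_ofPred_eq, d1] at hj
    rcases hj with hj | hj
    · linarith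
    · linarith [hj.1]
  have hcard : S.ncard ≤ B.card := by
    calc S.ncard ≤ (g '' (B : Set (Fin (l * c)))).ncard :=
          Set.ncard_le_ncard hsub (Set.toFinite _)
      _ ≤ (B : Set (Fin (l * c))).ncard := Set.ncard_image_le (Set.toFinite _)
      _ = B.card := Set.ncard_coe_finset B
  have hsum : (B.card : ℝ≥0∞) ≤ ∑ i, (nzInd (Y i) + nzInd (Y' i) + nzInd (Z i)) := by
    calc (B.card : ℝ≥0∞) = ∑ i ∈ B, 1 := by simp
      _ ≤ ∑ i ∈ B, (nzInd (Y i) + nzInd (Y' i) + nzInd (Z i)) := by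
          apply Finset.sum_le_sum
          intro i hi
          simp only [B, Finset.mem_filter, Finset.mem_univ, true_and] at hi
          rcases hi with hi | hi | hi
          · rw [nzInd_zero_or _ hi, add_assoc]; exact le_self_add
          · rw [nzInd_zero_or _ hi, add_right_comm]; exact le_add_self
          · rw [nzInd_zero_or _ hi]; exact le_add_self
      _ ≤ _ := Finset.sum_le_sum_of_subset (Finset.subset_univ _)
  calc ((l * c / l : ℕ) : ℝ≥0∞) ≤ ((2 * B.card : ℕ) : ℝ≥0∞) := by
        exact_mod_cast hV.trans (by omega)
    _ = 2 * (B.card : ℝ≥0∞) := by push_cast; rfl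
    _ ≤ _ := by gcongr

lemma miscl_bound {d l : ℕ} (p N : ℝ) (hp : p ∈ Set.Ioo (0 : ℝ) 1) (hd : 0 < d) (hl : 0 < l)
    (hld : l ∣ d) :
    (sparseModel p N d (d / l) (sparseAssignedC2 d (d / l) l)).toReal ≤ 6 * (p * l) := by
  have : Fact (p ∈ Set.Ioo (0 : ℝ) 1) := ⟨hp⟩
  set c := d / l with hc
  set μ := sparseModel p N d c with hμ
  have P1 : ∀ i : Fin d, MeasurePreserving (fun ω : SparseSpace d c => ω.1 i) μ (noiseLaw p N) :=
    fun i => (measurePreserving_eval (fun _ : Fin d => noiseLaw p N) i).comp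
      measurePreserving_fst
  have P2 : ∀ i : Fin d, MeasurePreserving (fun ω : SparseSpace d c => ω.2.1 i) μ (noiseLaw p N) :=
    fun i => (measurePreserving_eval (fun _ : Fin d => noiseLaw p N) i).comp
      (measurePreserving_fst.comp measurePreserving_snd)
  have P3 : ∀ i : Fin d, MeasurePreserving (fun ω : SparseSpace d c => ω.2.2.1 i) μ
      (noiseLaw p N) :=
    fun i => (measurePreserving_eval (fun _ : Fin d => noiseLaw p N) i).comp
      (measurePreserving_fst.comp (measurePreserving_snd.comp measurePreserving_snd))
  have M1 : ∀ i : Fin d, Measurable (fun ω : SparseSpace d c => nzInd (ω.1 i)) :=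
    fun i => nzInd_meas.comp (P1 i).measurable
  have M2 : ∀ i : Fin d, Measurable (fun ω : SparseSpace d c => nzInd (ω.2.1 i)) :=
    fun i => nzInd_meas.comp (P2 i).measurable
  have M3 : ∀ i : Fin d, Measurable (fun ω : SparseSpace d c => nzInd (ω.2.2.1 i)) :=
    fun i => nzInd_meas.comp (P3 i).measurable
  have L1 : ∀ i, ∫⁻ ω, nzInd (ω.1 i) ∂μ ≤ ENNReal.ofReal p := fun i => by
    rw [(P1 i).lintegral_comp nzInd_meas]; exact nzInd_lint p N
  have L2 : ∀ i, ∫⁻ ω, nzInd (ω.2.1 i) ∂μ ≤ ENNReal.ofReal p := fun i => by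
    rw [(P2 i).lintegral_comp nzInd_meas]; exact nzInd_lint p N
  have L3 : ∀ i, ∫⁻ ω, nzInd (ω.2.2.1 i) ∂μ ≤ ENNReal.ofReal p := fun i => by
    rw [(P3 i).lintegral_comp nzInd_meas]; exact nzInd_lint p N
  let f : SparseSpace d c → ℝ≥0∞ := fun ω =>
    ∑ i : Fin d, (nzInd (ω.1 i) + nzInd (ω.2.1 i) + nzInd (ω.2.2.1 i))
  have M : ∀ i : Fin d, Measurable (fun ω : SparseSpace d c =>
      nzInd (ω.1 i) + nzInd (ω.2.1 i) + nzInd (ω.2.2.1 i)) :=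
    fun i => ((M1 i).add (M2 i)).add (M3 i)
  have hf : Measurable f := Finset.measurable_fun_sum _ (fun i _ => M i)
  have hint : ∫⁻ ω, 2 * f ω ∂μ ≤ ENNReal.ofReal (6 * p * d) := by
    rw [lintegral_const_mul _ hf, lintegral_finsetSum _ (fun i _ => M i)]
    calc _ ≤ 2 * ∑ i : Fin d, (ENNReal.ofReal p + ENNReal.ofReal p + ENNReal.ofReal p) := by
          gcongr with i
          rw [lintegral_add_right _ (M3 i), lintegral_add_right _ (M2 i)]
          exact add_le_add (add_le_add (L1 i) (L2 i)) (L3 i)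
      _ = _ := by
          have h0 := hp.1.le
          rw [← ENNReal.ofReal_add h0 h0, ← ENNReal.ofReal_add (by linarith) h0]
          simp only [Finset.sum_const, Finset.card_univ, Fintype.card_fin, nsmul_eq_mul]
          rw [← ENNReal.ofReal_natCast d, ← ENNReal.ofReal_ofNat 2,
            ← ENNReal.ofReal_mul (by positivity), ← ENNReal.ofReal_mul (by positivity)]
          congr 1; ring
  have hmk := mul_meas_ge_le_lintegral (μ := μ) (hf.const_mul 2) (c : ℝ≥0∞)
  have hsub : sparseAssignedC2 d c l ⊆ {ω | (c : ℝ≥0∞) ≤ 2 * f ω} :=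
    fun ω h => vote_count hd hl hld ω h
  have key : (c : ℝ≥0∞) * μ (sparseAssignedC2 d c l) ≤ ENNReal.ofReal (6 * p * d) :=
    (mul_le_mul_right (measure_mono hsub) _).trans (hmk.trans hint)
  have key2 := ENNReal.toReal_mono ENNReal.ofReal_ne_top key
  have hdc : (d : ℝ) = c * l := by
    rw [hc]; exact_mod_cast (Nat.div_mul_cancel hld).symm
  have hcpos : (0 : ℝ) < c := by
    have : 0 < c := Nat.div_pos (Nat.le_of_dvd hd hld) hl
    exact_mod_cast this
  rw [ENNReal.toReal_mul, ENNReal.toReal_natCast,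
    ENNReal.toReal_ofReal (by have := hp.1; positivity), hdc] at key2
  refine le_of_mul_le_mul_left ?_ hcpos
  linarith

/-- in the two-class sparse-perturbation model, if `l(d) → ∞` and
`p(d)·l(d) → 0`, then the `c`-segmentation rule with `c = d/l` classifies
correctly with probability tending to one:
`P(w misclassified with c = d/l) → 0` as `d → ∞`. -/
theorem segmentation_rule_succeeds (l : ℕ → ℕ) (N p : ℕ → ℝ)
    (hl0 : ∀ d, 0 < l d) (hld : ∀ d, l d ∣ d)
    (hN : ∀ d, 0 < N d) (hp : ∀ d, p d ∈ Set.Ioo (0 : ℝ) 1)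
    (hl : Tendsto (fun d : ℕ => (l d : ℝ)) atTop atTop)
    (hpl : Tendsto (fun d : ℕ => p d * (l d : ℝ)) atTop (nhds 0)) :
    Tendsto (fun d : ℕ =>
        ((sparseModel (p d) (N d) d (d / l d)) (sparseAssignedC2 d (d / l d) (l d))).toReal)
      atTop (nhds 0) := by
  refine tendsto_of_tendsto_of_tendsto_of_le_of_le' (h := fun d => 6 * (p d * (l d : ℝ)))
    tendsto_const_nhds (by simpa using hpl.const_mul 6) (Eventually.of_forall fun d =>
      ENNReal.toReal_nonneg) ?_
  filter_upwards [eventually_gt_atTop 0] with d hd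
  exact miscl_bound (p d) (N d) (hp d) hd (hl0 d) (hld d)

end
end

section
/- Let (c_m) be a sequence of positive integers with c_m → ∞ and let (p_m) ⊂ (0,1) be a sequence with log p_m → −∞ as m → ∞. For each m let Y₁,…,Y_{c_m} be i.i.d. Bernoulli random variables with success probability p_m. Then lim_{m→∞} log P(Σ_{j=1}^{c_m} Y_j ≥ c_m/2) / (c_m · log p_m) = 1/2; equivalently, the probability that at least half of c_m independent rare events of probability p_m occur behaves on the exponential scale like p_m^{c_m/2}. -/
/-!
STATEMENT 14 (CONTEXT 14).  Let `c_m → ∞` be positive integers and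
`p_m ∈ (0,1)` with `log p_m → -∞`.  For i.i.d. Bernoulli(`p_m`) random
variables `Y₁, …, Y_{c_m}` (value `1` with probability `p_m`, `0` with
probability `1 - p_m`, realized as the coordinates of the product measure),
`lim_{m→∞} log P(Σ_{j=1}^{c_m} Y_j ≥ c_m/2) / (c_m · log p_m) = 1/2`:
the probability that at least half of `c_m` independent rare events of
probability `p_m` occur behaves on the exponential scale like `p_m^{c_m/2}`.
-/

open MeasureTheory Filter
open scoped ENNReal

noncomputable section

/-- Law of a Bernoulli(`p`) coordinate: `1` with probability `p`, `0` with
probability `1-p`. -/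
def bernLaw (p : ℝ) : Measure ℝ :=
  ENNReal.ofReal p • Measure.dirac 1 + ENNReal.ofReal (1 - p) • Measure.dirac 0

instance bernLaw_finite (p : ℝ) : IsFiniteMeasure (bernLaw p) := by
  unfold bernLaw
  have h1 : IsFiniteMeasure (ENNReal.ofReal p • (Measure.dirac 1 : Measure ℝ)) :=
    Measure.smul_finite _ ENNReal.ofReal_ne_top
  have h2 : IsFiniteMeasure (ENNReal.ofReal (1 - p) • (Measure.dirac 0 : Measure ℝ)) :=
    Measure.smul_finite _ ENNReal.ofReal_ne_top
  infer_instance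

lemma bernLaw_integrable (p : ℝ) (f : ℝ → ℝ) : Integrable f (bernLaw p) := by
  unfold bernLaw
  refine Integrable.add_measure ?_ ?_
  · exact (integrable_dirac (by simp)).smul_measure ENNReal.ofReal_ne_top
  · exact (integrable_dirac (by simp)).smul_measure ENNReal.ofReal_ne_top

lemma bernLaw_integral (p : ℝ) (hp : p ∈ Set.Ioo (0 : ℝ) 1) (f : ℝ → ℝ) :
    ∫ x, f x ∂(bernLaw p) = p * f 1 + (1 - p) * f 0 := by
  unfold bernLaw
  rw [integral_add_measure, integral_smul_measure, integral_smul_measure, integral_dirac,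
    integral_dirac, ENNReal.toReal_ofReal hp.1.le, ENNReal.toReal_ofReal (by linarith [hp.2])]
  · simp
  · exact (integrable_dirac (by simp)).smul_measure ENNReal.ofReal_ne_top
  · exact (integrable_dirac (by simp)).smul_measure ENNReal.ofReal_ne_top

lemma majority_upper (n : ℕ) (p : ℝ) (hp : p ∈ Set.Ioo (0 : ℝ) 1) :
    ((Measure.pi fun _ : Fin n => bernLaw p) {x | (n : ℝ) / 2 ≤ ∑ j, x j}).toReal
      ≤ (2 * Real.exp (Real.log p / 2)) ^ n := by
  set L := Real.log p with hL
  have hLneg : L < 0 := Real.log_neg hp.1 hp.2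
  let f : ℝ → ℝ := fun x => Real.exp (-L * (x - 1 / 2))
  have hint : Integrable (fun x : Fin n → ℝ => ∏ j, f (x j))
      (Measure.pi fun _ : Fin n => bernLaw p) :=
    Integrable.fintype_prod (fun _ => bernLaw_integrable p f)
  have hmk := mul_meas_ge_le_integral_of_nonneg
    (f := fun x : Fin n → ℝ => ∏ j, f (x j))
    (ae_of_all _ fun x => Finset.prod_nonneg fun j _ => (Real.exp_pos _).le) hint 1
  rw [integral_fintype_prod_eq_pow f, bernLaw_integral p hp, one_mul, Fintype.card_fin] at hmk
  have hset : {x : Fin n → ℝ | (n : ℝ) / 2 ≤ ∑ j, x j} = {x | 1 ≤ ∏ j, f (x j)} := by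
    ext x
    simp only [Set.mem_setOf_eq, f]
    rw [← Real.exp_sum, Real.one_le_exp_iff, ← Finset.mul_sum, Finset.sum_sub_distrib]
    simp only [Finset.sum_const, Finset.card_univ, Fintype.card_fin, nsmul_eq_mul]
    rw [mul_nonneg_iff_of_pos_left (by linarith)]
    constructor <;> intro h <;> linarith
  rw [hset]
  refine hmk.trans ?_
  have e1 : p * f 1 = Real.exp (L / 2) := by
    have : p = Real.exp L := (Real.exp_log hp.1).symm
    simp only [f]
    rw [this, ← Real.exp_add]
    congr 1; ring
  have e0 : f 0 = Real.exp (L / 2) := by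
    simp only [f]; congr 1; ring
  rw [e1, e0]
  have hE := Real.exp_pos (L / 2)
  have h1 : 0 ≤ (1 - p) * Real.exp (L / 2) := mul_nonneg (by linarith [hp.2]) hE.le
  refine pow_le_pow_left₀ (by linarith) ?_ n
  nlinarith [mul_pos hp.1 hE]

lemma majority_lower (n : ℕ) (p : ℝ) (hp : p ∈ Set.Ioo (0 : ℝ) 1) :
    p ^ ((n + 1) / 2) ≤
      ((Measure.pi fun _ : Fin n => bernLaw p) {x | (n : ℝ) / 2 ≤ ∑ j, x j}).toReal := by
  set k := (n + 1) / 2 with hk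
  have hkn : k ≤ n := by omega
  have hkn2 : (n : ℝ) / 2 ≤ k := by
    have : n ≤ 2 * k := by omega
    have : (n : ℝ) ≤ 2 * k := by exact_mod_cast this
    linarith
  have hcard : (Finset.univ.filter fun j : Fin n => (j : ℕ) < k).card = k := by
    rw [Fin.card_filter_val_lt]; omega
  let s : Fin n → Set ℝ := fun j => if (j : ℕ) < k then Set.Ici 1 else Set.Ici 0
  have hsub : Set.pi Set.univ s ⊆ {x : Fin n → ℝ | (n : ℝ) / 2 ≤ ∑ j, x j} := by
    intro x hx
    have hx' : ∀ j : Fin n, (if (j : ℕ) < k then (1 : ℝ) else 0) ≤ x j := by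
      intro j
      have := hx j trivial
      simp only [s] at this
      split_ifs at this ⊢ <;> exact this
    have := Finset.sum_le_sum (s := Finset.univ) fun j _ => hx' j
    rw [Finset.sum_boole, hcard] at this
    exact hkn2.trans this
  have hm : ((Measure.pi fun _ : Fin n => bernLaw p) (Set.pi Set.univ s)).toReal = p ^ k := by
    rw [Measure.pi_pi, ENNReal.toReal_prod]
    have : ∀ j : Fin n, (bernLaw p (s j)).toReal = if (j : ℕ) < k then p else 1 := by
      intro j
      simp only [s]
      split_ifs
      · simp [bernLaw, hp.1.le]
      · have h1 : (0 : ℝ) ≤ 1 - p := by linarith [hp.2]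
        simp [bernLaw, ← ENNReal.ofReal_add hp.1.le h1]
    simp only [this]
    rw [Finset.prod_ite, Finset.prod_const, hcard]
    simp
  rw [← hm]
  exact ENNReal.toReal_mono (measure_ne_top _ _) (measure_mono hsub)

/-- the probability that a majority of `c_m` independent
Bernoulli(`p_m`) variables equals `1` behaves like `p_m^{c_m/2}` on the
exponential scale:
`lim_{m→∞} log P(Σ_{j=1}^{c_m} Y_j ≥ c_m/2) / (c_m · log p_m) = 1/2`. -/
theorem majority_of_rare_events_rate (c : ℕ → ℕ) (p : ℕ → ℝ)
    (hc0 : ∀ m, 0 < c m) (hc : Tendsto c atTop atTop)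
    (hp : ∀ m, p m ∈ Set.Ioo (0 : ℝ) 1)
    (hlogp : Tendsto (fun m : ℕ => Real.log (p m)) atTop atBot) :
    Tendsto (fun m : ℕ =>
        Real.log (((Measure.pi fun _ : Fin (c m) => bernLaw (p m))
            {x | (c m : ℝ) / 2 ≤ ∑ j, x j}).toReal) /
          ((c m : ℝ) * Real.log (p m)))
      atTop (nhds (1 / 2)) := by
  have hlow : Tendsto (fun m : ℕ => 1 / 2 + Real.log 2 / Real.log (p m)) atTop (nhds (1 / 2)) := by
    have := (hlogp.const_div_atBot (Real.log 2)).const_add (1 / 2 : ℝ)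
    simpa using this
  have hhigh : Tendsto (fun m : ℕ => 1 / 2 + 1 / (c m : ℝ)) atTop (nhds (1 / 2)) := by
    have := ((tendsto_natCast_atTop_atTop (R := ℝ)).comp hc).const_div_atTop 1
    simpa using this.const_add (1 / 2 : ℝ)
  refine tendsto_of_tendsto_of_tendsto_of_le_of_le hlow hhigh ?_ ?_
  · intro m
    have hL : Real.log (p m) < 0 := Real.log_neg (hp m).1 (hp m).2
    have hn : (0 : ℝ) < c m := by exact_mod_cast hc0 m
    have hpos := (pow_pos (hp m).1 _).trans_le (majority_lower (c m) (p m) (hp m))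
    have h := Real.log_le_log hpos (majority_upper (c m) (p m) (hp m))
    rw [Real.log_pow, Real.log_mul (by norm_num) (Real.exp_pos _).ne', Real.log_exp] at h
    dsimp only
    rw [le_div_iff_of_neg (mul_neg_of_pos_of_neg hn hL)]
    refine h.trans (le_of_eq ?_)
    have := hL.ne
    field_simp
    ring
  · intro m
    have hL : Real.log (p m) < 0 := Real.log_neg (hp m).1 (hp m).2
    have hn : (0 : ℝ) < c m := by exact_mod_cast hc0 m
    have h := Real.log_le_log (pow_pos (hp m).1 _) (majority_lower (c m) (p m) (hp m))
    rw [Real.log_pow] at h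
    dsimp only
    rw [div_le_iff_of_neg (mul_neg_of_pos_of_neg hn hL)]
    refine le_trans ?_ h
    have hk : (((c m + 1) / 2 : ℕ) : ℝ) ≤ c m / 2 + 1 := by
      have : 2 * ((c m + 1) / 2) ≤ c m + 2 := by omega
      have : (2 : ℝ) * (((c m + 1) / 2 : ℕ) : ℝ) ≤ c m + 2 := by exact_mod_cast this
      linarith
    have e : (1 / 2 + 1 / (c m : ℝ)) * ((c m : ℝ) * Real.log (p m))
        = (c m / 2 + 1) * Real.log (p m) := by
      field_simp
    rw [e]
    exact mul_le_mul_of_nonpos_right hk hL.le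

end
end
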